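/- Let T ≥ 1 and let x : {1,...,T} × P → [0,1] be such that for each time step t, ∑_{p ∈ P} x(t,p) = 1 (P a finite set of paths). Define the path-change cost N(x) = ∑_{t=2}^{T} ∑_{p ∈ P} max(0, x(t,p) − x(t−1,p)). Then there exists a probability distribution λ over sequences s = (p_1,...,p_T) ∈ P^T such that (i) for every t and p, the probability under λ that s_t = p equals x(t,p), and (ii) the expected number of indices t ∈ {2,...,T} with s_t ≠ s_{t−1} equals N(x). -/

import Mathlib

/-- The time step preceding `t` (clamped at 0). -/
def fpred {T : ℕ} (t : Fin T) : Fin T :=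
  ⟨t.1 - 1, lt_of_le_of_lt (Nat.sub_le _ _) t.2⟩

/-- Number of path changes of a path-sequence `s`: indices `t ≥ 1` with `s t ≠ s (t-1)`. -/
def numChanges {P : Type*} [DecidableEq P] {T : ℕ} (s : Fin T → P) : ℕ :=
  (Finset.univ.filter (fun t : Fin T => 0 < t.1 ∧ s t ≠ s (fpred t))).card

/-- `N(x) = ∑_{t ≥ 1} ∑_p max 0 (x t p - x (t-1) p)`. -/
noncomputable def pathChangeCost {P : Type*} [Fintype P] {T : ℕ} (x : Fin T → P → ℝ) : ℝ :=
  ∑ t : Fin T, ∑ p : P, if 0 < t.1 then max 0 (x t p - x (fpred t) p) else 0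

/-!
Consecutive distributions `x t` and `x (t + 1)` are joined by a maximal coupling, which leaves the
common mass `min (x t p) (x (t + 1) p)` in place and so moves to each path `p` exactly the mass
`max 0 (x (t + 1) p - x t p)` that it gains. Conditioning these couplings on their first coordinate
gives transition matrices, and the law of the resulting inhomogeneous Markov chain has the
prescribed marginals. By linearity of expectation its expected number of changes is the total mass
moved.
-/

open Finset Matrix

section PathSequence

variable {P : Type*} {n : ℕ}

theorem fpred_succ (t : Fin n) : fpred t.succ = t.castSucc := rfl

theorem numChanges_eq_card [DecidableEq P] (s : Fin (n + 1) → P) :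
    numChanges s = #{t : Fin n | s t.castSucc ≠ s t.succ} := by
  simp [numChanges, Fin.card_filter_univ_succ, fpred_succ, ne_comm]

theorem pathChangeCost_eq_sum [Fintype P] (x : Fin (n + 1) → P → ℝ) :
    pathChangeCost x = ∑ t : Fin n, ∑ p, max 0 (x t.succ p - x t.castSucc p) := by
  simp [pathChangeCost, Fin.sum_univ_succ, fpred_succ]

end PathSequence

section Coupling

variable {P : Type*} [Fintype P]

section AddCommMonoid

variable {R : Type*} [AddCommMonoid R] [PartialOrder R] {μ ν μ' ν' : P → R} {c c' : Matrix P P R}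

/-- A coupling of two finite mass functions `μ` and `ν`: a nonnegative matrix with row sums `μ` and
column sums `ν`. The total mass is not required to be `1`, so that couplings can be added. -/
structure IsCoupling (μ ν : P → R) (c : Matrix P P R) : Prop where
  nonneg : ∀ a b, 0 ≤ c a b
  sum_row : ∀ a, ∑ b, c a b = μ a
  sum_col : ∀ b, ∑ a, c a b = ν b

theorem IsCoupling.add [IsOrderedAddMonoid R] (hc : IsCoupling μ ν c) (hc' : IsCoupling μ' ν' c') :
    IsCoupling (μ + μ') (ν + ν') (c + c') where
  nonneg a b := add_nonneg (hc.nonneg a b) (hc'.nonneg a b)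
  sum_row a := by simp [sum_add_distrib, hc.sum_row, hc'.sum_row]
  sum_col b := by simp [sum_add_distrib, hc.sum_col, hc'.sum_col]

theorem isCoupling_diagonal [DecidableEq P] (hμ : ∀ p, 0 ≤ μ p) :
    IsCoupling μ μ (diagonal μ) where
  nonneg a b := by
    rw [diagonal_apply]
    split_ifs
    exacts [hμ a, le_rfl]
  sum_row a := by simp [diagonal_apply]
  sum_col b := by simp [diagonal_apply]

end AddCommMonoid

variable {𝕜 : Type*} [Field 𝕜] [LinearOrder 𝕜] [IsStrictOrderedRing 𝕜] {μ ν : P → 𝕜}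

theorem isCoupling_mul_div_sum (hμ : ∀ p, 0 ≤ μ p) (hν : ∀ p, 0 ≤ ν p)
    (hsum : ∑ p, μ p = ∑ p, ν p) :
    IsCoupling μ ν (of fun a b => μ a * ν b / ∑ p, ν p) := by
  have mul_div_cancel_of_le {m D : 𝕜} (hm : 0 ≤ m) (hmD : m ≤ D) : m * D / D = m :=
    mul_div_cancel_of_imp fun hD => le_antisymm (hD ▸ hmD) hm
  refine ⟨fun a b => ?_, fun a => ?_, fun b => ?_⟩
  · exact div_nonneg (mul_nonneg (hμ a) (hν b)) (sum_nonneg fun p _ => hν p)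
  · simp only [of_apply, ← sum_div, ← mul_sum]
    exact mul_div_cancel_of_le (hμ a)
      (hsum ▸ single_le_sum (fun p _ => hμ p) (mem_univ a))
  · simp only [of_apply, ← sum_div, ← sum_mul]
    rw [hsum, mul_comm]
    exact mul_div_cancel_of_le (hν b) (single_le_sum (fun p _ => hν p) (mem_univ b))

theorem exists_isCoupling_diag_eq_min (hμ : ∀ p, 0 ≤ μ p) (hν : ∀ p, 0 ≤ ν p)
    (hsum : ∑ p, μ p = ∑ p, ν p) :
    ∃ c, IsCoupling μ ν c ∧ ∀ p, c p p = min (μ p) (ν p) := by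
  classical
  let m : P → 𝕜 := fun p => min (μ p) (ν p)
  have hstay : IsCoupling m m (diagonal m) := isCoupling_diagonal fun p => le_min (hμ p) (hν p)
  have hmove := isCoupling_mul_div_sum (μ := μ - m) (ν := ν - m)
    (fun p => sub_nonneg.2 (min_le_left _ _)) (fun p => sub_nonneg.2 (min_le_right _ _))
    (by simp [hsum])
  have hdisjoint (p : P) : (μ p - m p) * (ν p - m p) = 0 := by
    rcases min_choice (μ p) (ν p) with h | h <;> simp [m, h]
  have hadd := hstay.add hmove
  rw [add_sub_cancel, add_sub_cancel] at hadd
  refine ⟨_, hadd, fun p => ?_⟩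
  rw [Matrix.add_apply, diagonal_apply_eq, of_apply, Pi.sub_apply, Pi.sub_apply, hdisjoint,
    zero_div, add_zero]

theorem IsCoupling.exists_rowStochastic [DecidableEq P] {c : Matrix P P 𝕜}
    (hc : IsCoupling μ ν c) :
    ∃ K ∈ rowStochastic 𝕜 P, ∀ a b, μ a * K a b = c a b := by
  have hμ (a : P) : 0 ≤ μ a := hc.sum_row a ▸ sum_nonneg fun b _ => hc.nonneg a b
  have eq_zero {a : P} (ha : μ a = 0) (b : P) : c a b = 0 :=
    (sum_eq_zero_iff_of_nonneg fun b _ => hc.nonneg a b).1 ((hc.sum_row a).trans ha) b (mem_univ b)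
  -- On the null set of `μ` the conditional distribution is arbitrary; there the chain stays put.
  let K : Matrix P P 𝕜 :=
    of fun a b => if μ a = 0 then (1 : Matrix P P 𝕜) a b else c a b / μ a
  refine ⟨K, mem_rowStochastic_iff_sum.2 ⟨fun a b => ?_, fun a => ?_⟩, fun a b => ?_⟩
  · simp only [K, of_apply, one_apply]
    split_ifs
    exacts [zero_le_one, le_rfl, div_nonneg (hc.nonneg a b) (hμ a)]
  · by_cases ha : μ a = 0
    · simp [K, ha, one_apply]
    · simp [K, ha, ← sum_div, hc.sum_row]
  · by_cases ha : μ a = 0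
    · simp [ha, eq_zero ha]
    · simp [K, ha, mul_div_cancel₀]

theorem exists_rowStochastic_vecMul_eq [DecidableEq P] (hμ : ∀ p, 0 ≤ μ p) (hν : ∀ p, 0 ≤ ν p)
    (hsum : ∑ p, μ p = ∑ p, ν p) :
    ∃ K ∈ rowStochastic 𝕜 P, μ ᵥ* K = ν ∧ ∀ p, μ p * K p p = min (μ p) (ν p) := by
  obtain ⟨c, hc, hdiag⟩ := exists_isCoupling_diag_eq_min hμ hν hsum
  obtain ⟨K, hK, hKc⟩ := hc.exists_rowStochastic
  refine ⟨K, hK, funext fun b => ?_, fun p => (hKc p p).trans (hdiag p)⟩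
  simp only [vecMul, dotProduct, hKc, hc.sum_col]

end Coupling

section MarkovLaw

variable {P R : Type*} {n : ℕ}

/-- The law on path-sequences of the inhomogeneous Markov chain with initial mass function `μ` and
transition matrix `K t` from time `t` to time `t + 1`. -/
def markovLaw [CommMonoid R] (μ : P → R) (K : Fin n → Matrix P P R) (s : Fin (n + 1) → P) : R :=
  μ (s 0) * ∏ t, K t (s t.castSucc) (s t.succ)

theorem markovLaw_snoc [CommMonoid R] (μ : P → R) (K : Fin (n + 1) → Matrix P P R)
    (s : Fin (n + 1) → P) (p : P) :
    markovLaw μ K (Fin.snoc s p : Fin (n + 2) → P) =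
      markovLaw μ (fun t => K t.castSucc) s * K (Fin.last n) (s (Fin.last n)) p := by
  simp only [markovLaw, Fin.prod_univ_castSucc, Fin.succ_castSucc, Fin.succ_last,
    Fin.snoc_castSucc (α := fun _ => P), Fin.snoc_last (α := fun _ => P), mul_assoc,
    ← Fin.castSucc_zero]

theorem markovLaw_nonneg [CommSemiring R] [PartialOrder R] [IsOrderedRing R] {μ : P → R}
    {K : Fin n → Matrix P P R} (hμ : ∀ p, 0 ≤ μ p) (hK : ∀ t a b, 0 ≤ K t a b)
    (s : Fin (n + 1) → P) : 0 ≤ markovLaw μ K s :=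
  mul_nonneg (hμ _) (prod_nonneg fun t _ => hK t _ _)

variable [Fintype P]

section CommSemiring

variable [CommSemiring R] {μ : P → R}

theorem sum_markovLaw_succ_mul (K : Fin (n + 1) → Matrix P P R)
    (f : (Fin (n + 1) → P) → P → R) :
    ∑ s : Fin (n + 2) → P, markovLaw μ K s * f (Fin.init s) (s (Fin.last (n + 1))) =
      ∑ s, markovLaw μ (fun t => K t.castSucc) s *
        ∑ p, K (Fin.last n) (s (Fin.last n)) p * f s p := by
  rw [← (Fin.snocEquiv fun _ : Fin (n + 2) => P).sum_comp, Fintype.sum_prod_type_right]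
  refine sum_congr rfl fun s _ => ?_
  rw [mul_sum]
  refine sum_congr rfl fun p _ => ?_
  rw [← mul_assoc, ← markovLaw_snoc]
  simp [Fin.snocEquiv]

theorem sum_markovLaw_mul_init {K : Fin (n + 1) → Matrix P P R} (hK : ∀ t, K t *ᵥ 1 = 1)
    (f : (Fin (n + 1) → P) → R) :
    ∑ s : Fin (n + 2) → P, markovLaw μ K s * f (Fin.init s) =
      ∑ s, markovLaw μ (fun t => K t.castSucc) s * f s := by
  have sum_row (a : P) : ∑ p, K (Fin.last n) a p = 1 := by
    simpa [mulVec, dotProduct] using congrFun (hK (Fin.last n)) a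
  rw [sum_markovLaw_succ_mul K fun s _ => f s]
  simp only [← sum_mul, sum_row, one_mul]

variable {K : Fin n → Matrix P P R} {x : Fin (n + 1) → P → R}

theorem sum_markovLaw (hK : ∀ t, K t *ᵥ 1 = 1) : ∑ s, markovLaw μ K s = ∑ p, μ p := by
  induction n with
  | zero => simp [markovLaw, ← (Equiv.funUnique (Fin 1) P).symm.sum_comp]
  | succ n ih =>
    simpa [ih fun t => hK t.castSucc] using sum_markovLaw_mul_init (μ := μ) hK fun _ => 1

theorem sum_markovLaw_mul_apply (hK : ∀ t, K t *ᵥ 1 = 1)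
    (hx : ∀ t, x t.castSucc ᵥ* K t = x t.succ) (t : Fin (n + 1)) (f : P → R) :
    ∑ s, markovLaw (x 0) K s * f (s t) = ∑ p, x t p * f p := by
  induction n generalizing f with
  | zero =>
    rw [Subsingleton.elim (α := Fin 1) t 0]
    simp [markovLaw, ← (Equiv.funUnique (Fin 1) P).symm.sum_comp]
  | succ n ih =>
    have ih := ih (x := fun t => x t.castSucc) (fun t => hK t.castSucc) fun t => hx t.castSucc
    cases t using Fin.lastCases with
    | cast t => exact (sum_markovLaw_mul_init hK fun s => f (s t)).trans (ih t f)
    | last =>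
      calc ∑ s, markovLaw (x 0) K s * f (s (Fin.last (n + 1)))
          = ∑ a, x (Fin.last n).castSucc a * ∑ p, K (Fin.last n) a p * f p :=
            (sum_markovLaw_succ_mul K fun _ => f).trans
              (ih (Fin.last n) (K (Fin.last n) *ᵥ f))
        _ = x (Fin.last n).castSucc ⬝ᵥ K (Fin.last n) *ᵥ f := rfl
        _ = ∑ p, x (Fin.last (n + 1)) p * f p := by
            rw [dotProduct_mulVec, hx, Fin.succ_last, dotProduct]

theorem sum_markovLaw_mul_step (hK : ∀ t, K t *ᵥ 1 = 1)
    (hx : ∀ t, x t.castSucc ᵥ* K t = x t.succ) (t : Fin n) (f : P → P → R) :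
    ∑ s, markovLaw (x 0) K s * f (s t.castSucc) (s t.succ) =
      ∑ a, x t.castSucc a * ∑ b, K t a b * f a b := by
  induction n with
  | zero => exact t.elim0
  | succ n ih =>
    have hK' := fun t : Fin n => hK t.castSucc
    have hx' := fun t : Fin n => hx t.castSucc
    cases t using Fin.lastCases with
    | cast t =>
      exact (sum_markovLaw_mul_init hK fun s => f (s t.castSucc) (s t.succ)).trans
        (ih (x := fun t => x t.castSucc) hK' hx' t)
    | last =>
      exact (sum_markovLaw_succ_mul K fun s => f (s (Fin.last n))).trans
        (sum_markovLaw_mul_apply (x := fun t => x t.castSucc) hK' hx' (Fin.last n)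
          fun a => ∑ b, K (Fin.last n) a b * f a b)

theorem sum_markovLaw_filter_apply_eq [DecidableEq P] (hK : ∀ t, K t *ᵥ 1 = 1)
    (hx : ∀ t, x t.castSucc ᵥ* K t = x t.succ) (t : Fin (n + 1)) (p : P) :
    ∑ s with s t = p, markovLaw (x 0) K s = x t p := by
  simpa [sum_filter] using sum_markovLaw_mul_apply hK hx t fun a => if a = p then 1 else 0

end CommSemiring

theorem sum_markovLaw_mul_numChanges [DecidableEq P] [CommRing R] {K : Fin n → Matrix P P R}
    {x : Fin (n + 1) → P → R} (hK : ∀ t, K t *ᵥ 1 = 1)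
    (hx : ∀ t, x t.castSucc ᵥ* K t = x t.succ) :
    ∑ s, markovLaw (x 0) K s * (numChanges s : R) =
      ∑ t : Fin n, ∑ p, (x t.succ p - x t.castSucc p * K t p p) := by
  have arrivals (t : Fin n) :
      ∑ s, markovLaw (x 0) K s * (if s t.castSucc ≠ s t.succ then 1 else 0) =
        ∑ p, (x t.succ p - x t.castSucc p * K t p p) := by
    rw [sum_markovLaw_mul_step hK hx t fun a b => if a ≠ b then 1 else 0]
    simp only [← hx, vecMul, dotProduct, sum_sub_distrib, mul_sum]
    rw [sum_comm, ← sum_sub_distrib]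
    refine sum_congr rfl fun b _ => ?_
    simp [ite_not, sum_ite, filter_ne', sum_erase_eq_sub]
  simp only [numChanges_eq_card, card_filter, Nat.cast_sum, Nat.cast_ite, Nat.cast_one,
    Nat.cast_zero, mul_sum]
  rw [sum_comm]
  exact sum_congr rfl fun t _ => arrivals t

end MarkovLaw

theorem stmt0 {P : Type*} [Fintype P] [DecidableEq P] {T : ℕ} (hT : 1 ≤ T)
    (x : Fin T → P → ℝ)
    (hx0 : ∀ t p, 0 ≤ x t p) (hx1 : ∀ t p, x t p ≤ 1)
    (hsum : ∀ t, ∑ p, x t p = 1) :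
    ∃ lam : (Fin T → P) → ℝ,
      (∀ s, 0 ≤ lam s) ∧
      (∑ s, lam s) = 1 ∧
      (∀ (t : Fin T) (p : P),
        ∑ s ∈ Finset.univ.filter (fun s : Fin T → P => s t = p), lam s = x t p) ∧
      (∑ s : Fin T → P, lam s * (numChanges s : ℝ)) = pathChangeCost x := by
  obtain ⟨n, rfl⟩ := Nat.exists_eq_add_of_le' hT
  choose K hK hx hstay using fun t : Fin n =>
    exists_rowStochastic_vecMul_eq (hx0 t.castSucc) (hx0 t.succ)
      ((hsum t.castSucc).trans (hsum t.succ).symm)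
  have hK1 (t : Fin n) : K t *ᵥ 1 = 1 := one_vecMul_of_mem_rowStochastic (hK t)
  refine ⟨markovLaw (x 0) K,
    markovLaw_nonneg (hx0 0) fun t a b => nonneg_of_mem_rowStochastic (hK t),
    (sum_markovLaw hK1).trans (hsum 0), sum_markovLaw_filter_apply_eq hK1 hx, ?_⟩
  rw [sum_markovLaw_mul_numChanges hK1 hx, pathChangeCost_eq_sum]
  refine sum_congr rfl fun t _ => sum_congr rfl fun p _ => ?_
  rw [hstay, ← max_sub_sub_left, sub_self, max_comm]
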